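/- (Maximum principle for free holomorphic functions.) If F : [B(H)^n]_1 → B(H) is a free holomorphic function with scalar coefficients and there exists X_0 ∈ [B(H)^n]_1 such that ‖F(X_0)‖ ≥ ‖F(X)‖ for all X ∈ [B(H)^n]_1, then F is constant. -/

import Mathlib

noncomputable section

open Filter

namespace NC

variable {H : Type*} [NormedAddCommGroup H] [InnerProductSpace ℂ H] [CompleteSpace H]

/-- The product `X_α = X_{i₁} ⋯ X_{i_k}` for a word `α = g_{i₁} ⋯ g_{i_k}`. -/
def wordProd {n : ℕ} (X : Fin n → H →L[ℂ] H) (w : List (Fin n)) : H →L[ℂ] H :=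
  (w.map X).prod

/-- The row norm `‖X₁X₁^* + ⋯ + XₙXₙ^*‖^{1/2}` of a tuple. -/
def rowNorm {n : ℕ} (X : Fin n → H →L[ℂ] H) : ℝ :=
  Real.sqrt ‖∑ i, X i * ContinuousLinearMap.adjoint (X i)‖

/-- The open operatorial ball `[B(H)ⁿ]_γ`. -/
def ball (n : ℕ) (H : Type*) [NormedAddCommGroup H] [InnerProductSpace ℂ H]
    [CompleteSpace H] (γ : ℝ) : Set (Fin n → H →L[ℂ] H) :=
  {X | rowNorm X < γ}

/-- The closed operatorial ball `[B(H)ⁿ]_γ⁻`. -/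
def cball (n : ℕ) (H : Type*) [NormedAddCommGroup H] [InnerProductSpace ℂ H]
    [CompleteSpace H] (γ : ℝ) : Set (Fin n → H →L[ℂ] H) :=
  {X | rowNorm X ≤ γ}

/-- The homogeneous part of degree `k` of the power series with coefficients `a`,
evaluated at `X`:  `∑_{|α|=k} a_α X_α`. -/
def homog {n : ℕ} (a : List (Fin n) → ℂ) (X : Fin n → H →L[ℂ] H) (k : ℕ) :
    H →L[ℂ] H :=
  ∑ w : Fin k → Fin n, a (List.ofFn w) • wordProd X (List.ofFn w)

/-- `RepOn γ a F` means that the free power series with coefficients `a` converges in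
operator norm to `F X` at every point `X` of the open ball `[B(H)ⁿ]_γ`; i.e. `F` is the
free holomorphic function with coefficients `a` on `[B(H)ⁿ]_γ`. -/
def RepOn {n : ℕ} (γ : ℝ) (a : List (Fin n) → ℂ)
    (F : (Fin n → H →L[ℂ] H) → H →L[ℂ] H) : Prop :=
  ∀ X ∈ ball n H γ,
    Tendsto (fun N => ∑ k ∈ Finset.range N, homog a X k) atTop (nhds (F X))

/-- `F` is a free holomorphic function (with scalar coefficients) on `[B(H)ⁿ]_γ`. -/
def IsFreeHolo {n : ℕ} (γ : ℝ) (F : (Fin n → H →L[ℂ] H) → H →L[ℂ] H) : Prop :=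
  ∃ a, RepOn γ a F

/-- `F` is a free holomorphic map `[B(H)ⁿ]_γ → B(H)^m`. -/
def IsFreeHoloMap {n m : ℕ} (γ : ℝ)
    (F : (Fin n → H →L[ℂ] H) → Fin m → H →L[ℂ] H) : Prop :=
  ∀ i, IsFreeHolo γ fun X => F X i

/-- `Ψ` is a free holomorphic automorphism of `[B(H)ⁿ]_γ`: a free holomorphic map of the
ball to itself admitting a free holomorphic inverse. -/
def IsFreeAut {n : ℕ} (γ : ℝ) (Ψ : (Fin n → H →L[ℂ] H) → Fin n → H →L[ℂ] H) : Prop :=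
  IsFreeHoloMap γ Ψ ∧ Set.MapsTo Ψ (ball n H γ) (ball n H γ) ∧
    ∃ Φ, IsFreeHoloMap γ Φ ∧ Set.MapsTo Φ (ball n H γ) (ball n H γ) ∧
      (∀ X ∈ ball n H γ, Φ (Ψ X) = X) ∧ ∀ X ∈ ball n H γ, Ψ (Φ X) = X

end NC

/- The idea is to restrict `F` to the complex lines `z ↦ F (z X)`. The line through `X₀` carries the
maximum of `‖F‖` to the origin, where `F 0 = a₀ 1` is a multiple of the identity. Hence on any other
line and for every vector `x`, the `H`-valued function `z ↦ F (z X) x` attains its maximal norm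
`|a₀| ‖x‖` at `z = 0`; it is constant because `H` is strictly convex. -/

section MaximumModulus

open Set

variable {E G K : Type*} [NormedAddCommGroup E] [NormedSpace ℂ E]
  [NormedAddCommGroup G] [NormedSpace ℂ G]
  [NormedAddCommGroup K] [NormedSpace ℂ K] [StrictConvexSpace ℝ K]

/- The operator norm is not strictly convex, so the maximum principle is applied to the orbits
`z ↦ f z x`, which are all maximal at `c` because `f c` is a multiple of an isometry. -/
theorem eqOn_of_isMaxOn_norm_of_norm_apply_eq {f : E → G →L[ℂ] K} {U : Set E} {c : E}
    (hU : IsPreconnected U) (hUo : IsOpen U) (hf : DifferentiableOn ℂ f U) (hc : c ∈ U)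
    (hmax : IsMaxOn (norm ∘ f) U c) (hfc : ∀ x, ‖f c x‖ = ‖f c‖ * ‖x‖) :
    EqOn f (Function.const E (f c)) U := by
  intro z hz
  ext x
  have hmax_x : IsMaxOn (norm ∘ fun u => f u x) U c := fun u hu =>
    ((f u).le_of_opNorm_le (hmax hu) x).trans_eq (hfc x).symm
  exact Complex.eqOn_of_isPreconnected_of_isMaxOn_norm hU hUo
    (hf.clm_apply (differentiableOn_const x)) hc hmax_x hz

end MaximumModulus

section PowerSeries

open Topology

theorem tendsto_zero_of_tendsto_sum_range {E : Type*} [AddCommGroup E] [TopologicalSpace E]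
    [IsTopologicalAddGroup E] {c : ℕ → E} {l : E}
    (h : Tendsto (fun N => ∑ k ∈ Finset.range N, c k) atTop (𝓝 l)) :
    Tendsto c atTop (𝓝 0) := by
  simpa only [Finset.sum_range_succ, add_sub_cancel_left, sub_self] using
    ((tendsto_add_atTop_iff_nat 1).2 h).sub h

theorem differentiableAt_of_tendsto_sum_pow_smul {𝕜 E : Type*} [NontriviallyNormedField 𝕜]
    [NormedAddCommGroup E] [NormedSpace 𝕜 E] [CompleteSpace E] {c : ℕ → E} {f : 𝕜 → E} {z w : 𝕜}
    (hw : Tendsto (fun k => w ^ k • c k) atTop (𝓝 0)) (hzw : ‖z‖ < ‖w‖)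
    (hf : ∀ᶠ u in 𝓝 z, Tendsto (fun N => ∑ k ∈ Finset.range N, u ^ k • c k) atTop (𝓝 (f u))) :
    DifferentiableAt 𝕜 f z := by
  let p : FormalMultilinearSeries 𝕜 𝕜 E :=
    fun k => ContinuousMultilinearMap.mkPiRing 𝕜 (Fin k) (c k)
  have hradius : (‖w‖₊ : ENNReal) ≤ p.radius := by
    refine p.le_radius_of_tendsto (l := 0) ?_
    simpa only [p, ContinuousMultilinearMap.norm_mkPiRing, norm_smul, norm_pow, norm_zero,
      coe_nnnorm, mul_comm] using hw.norm
  have hball : Metric.ball (0 : 𝕜) ‖w‖ ⊆ Metric.eball 0 p.radius := by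
    rw [← coe_nnnorm, ← Metric.eball_coe]
    exact Metric.eball_subset_eball hradius
  have hz : z ∈ Metric.ball (0 : 𝕜) ‖w‖ := mem_ball_zero_iff.2 hzw
  have hp : HasFPowerSeriesOnBall p.sum p 0 p.radius :=
    p.hasFPowerSeriesOnBall (zero_le.trans_lt (hball hz))
  have hsum : f =ᶠ[𝓝 z] p.sum := by
    filter_upwards [hf, Metric.isOpen_ball.mem_nhds hz] with u hu hmem
    have hpu := (hp.hasSum (hball hmem)).tendsto_sum_nat
    simp only [p, ContinuousMultilinearMap.mkPiRing_apply, Finset.prod_const, Finset.card_univ,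
      Fintype.card_fin, zero_add] at hpu
    exact tendsto_nhds_unique hu hpu
  exact (hp.analyticAt_of_mem (hball hz)).differentiableAt.congr_of_eventuallyEq hsum

end PowerSeries

namespace NC

variable {H : Type*} [NormedAddCommGroup H] [InnerProductSpace ℂ H] {n : ℕ}

section Homogeneity

theorem wordProd_smul (z : ℂ) (X : Fin n → H →L[ℂ] H) (w : List (Fin n)) :
    wordProd (z • X) w = z ^ w.length • wordProd X w := by
  induction w with
  | nil => simp [wordProd]
  | cons i w ih =>
    simp only [wordProd, List.map_cons, List.prod_cons, List.length_cons, Pi.smul_apply] at ih ⊢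
    rw [ih, smul_mul_smul_comm, pow_succ']

theorem homog_smul (a : List (Fin n) → ℂ) (z : ℂ) (X : Fin n → H →L[ℂ] H) (k : ℕ) :
    homog a (z • X) k = z ^ k • homog a X k := by
  simp only [homog, wordProd_smul, List.length_ofFn, Finset.smul_sum, smul_comm (z ^ k)]

theorem homog_degree_zero (a : List (Fin n) → ℂ) (X : Fin n → H →L[ℂ] H) :
    homog a X 0 = a [] • 1 := by
  simp [homog, wordProd]

theorem homog_zero_of_ne_zero (a : List (Fin n) → ℂ) {k : ℕ} (hk : k ≠ 0) :
    homog a (0 : Fin n → H →L[ℂ] H) k = 0 := by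
  simpa only [zero_smul, zero_pow hk] using homog_smul a 0 (0 : Fin n → H →L[ℂ] H) k

variable [CompleteSpace H]

theorem rowNorm_nonneg (X : Fin n → H →L[ℂ] H) : 0 ≤ rowNorm X :=
  Real.sqrt_nonneg _

theorem rowNorm_smul (z : ℂ) (X : Fin n → H →L[ℂ] H) :
    rowNorm (z • X) = ‖z‖ * rowNorm X := by
  have hgram : ∑ i, (z • X) i * ContinuousLinearMap.adjoint ((z • X) i)
      = (z * starRingEnd ℂ z) • ∑ i, X i * ContinuousLinearMap.adjoint (X i) := by
    simp only [Pi.smul_apply, map_smulₛₗ, smul_mul_smul_comm, Finset.smul_sum]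
  rw [rowNorm, hgram, norm_smul, norm_mul, RCLike.norm_conj, Real.sqrt_mul (by positivity),
    Real.sqrt_mul_self (norm_nonneg _), rowNorm]

end Homogeneity

variable [CompleteSpace H]

section SliceDisc

/-- The disc of those scalars `z` for which `z X` lies in the ball `[B(H)ⁿ]_γ`: the domain of the
restriction `z ↦ F (z X)` of a free holomorphic function to the complex line through `X`. It is all
of `ℂ` when `X = 0` and `0 < γ`. -/
def sliceDisc (γ : ℝ) (X : Fin n → H →L[ℂ] H) : Set ℂ :=
  {z | z • X ∈ ball n H γ}

variable {γ : ℝ} {X : Fin n → H →L[ℂ] H}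

theorem sliceDisc_eq : sliceDisc γ X = {z | ‖z‖ * rowNorm X < γ} := by
  simp only [sliceDisc, ball, Set.mem_ofPred_eq, rowNorm_smul]

theorem isOpen_sliceDisc : IsOpen (sliceDisc γ X) := by
  rw [sliceDisc_eq]
  exact isOpen_lt (by fun_prop) continuous_const

theorem isPreconnected_sliceDisc : IsPreconnected (sliceDisc γ X) := by
  have hconvex : ConvexOn ℝ Set.univ fun z : ℂ => rowNorm X * ‖z‖ :=
    (convexOn_norm convex_univ).smul (rowNorm_nonneg X)
  simpa only [sliceDisc_eq, Set.mem_univ, true_and, mul_comm] using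
    (hconvex.convex_lt γ).isPreconnected

theorem zero_mem_sliceDisc (hγ : 0 < γ) : 0 ∈ sliceDisc γ X := by
  simpa [sliceDisc_eq] using hγ

theorem one_mem_sliceDisc (hX : X ∈ ball n H γ) : 1 ∈ sliceDisc γ X := by
  simpa [sliceDisc] using hX

theorem exists_mem_sliceDisc_norm_lt {z : ℂ} (hz : z ∈ sliceDisc γ X) :
    ∃ w ∈ sliceDisc γ X, ‖z‖ < ‖w‖ := by
  rw [sliceDisc_eq] at hz ⊢
  have hnhds : ∀ᶠ r in nhdsWithin ‖z‖ (Set.Ioi ‖z‖), r * rowNorm X < γ :=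
    nhdsWithin_le_nhds ((isOpen_lt (by fun_prop) continuous_const).mem_nhds hz)
  obtain ⟨r, hr, hzr⟩ := (hnhds.and self_mem_nhdsWithin).exists
  have hnorm : ‖(r : ℂ)‖ = r := Complex.norm_of_nonneg ((norm_nonneg z).trans hzr.le)
  exact ⟨r, by rwa [Set.mem_ofPred_eq, hnorm], hzr.trans_eq hnorm.symm⟩

end SliceDisc

section MaximumPrinciple

variable {γ : ℝ} {a : List (Fin n) → ℂ} {F : (Fin n → H →L[ℂ] H) → H →L[ℂ] H}

theorem pos_of_mem_ball {X : Fin n → H →L[ℂ] H} (hX : X ∈ ball n H γ) : 0 < γ :=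
  (rowNorm_nonneg X).trans_lt hX

theorem zero_mem_ball (hγ : 0 < γ) : (0 : Fin n → H →L[ℂ] H) ∈ ball n H γ := by
  simpa [ball, rowNorm] using hγ

theorem RepOn.apply_zero (ha : RepOn γ a F) (hγ : 0 < γ) : F 0 = a [] • 1 := by
  have hsum : HasSum (homog a (0 : Fin n → H →L[ℂ] H)) (homog a 0 0) :=
    hasSum_single 0 fun k hk => homog_zero_of_ne_zero a hk
  rw [← homog_degree_zero a 0]
  exact tendsto_nhds_unique (ha 0 (zero_mem_ball hγ)) hsum.tendsto_sum_nat

theorem RepOn.differentiableOn_slice (ha : RepOn γ a F) (X : Fin n → H →L[ℂ] H) :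
    DifferentiableOn ℂ (fun z : ℂ => F (z • X)) (sliceDisc γ X) := by
  intro z hz
  have hseries : ∀ u ∈ sliceDisc γ X,
      Tendsto (fun N => ∑ k ∈ Finset.range N, u ^ k • homog a X k) atTop (nhds (F (u • X))) := by
    intro u hu
    simpa only [homog_smul] using ha (u • X) hu
  obtain ⟨w, hw, hzw⟩ := exists_mem_sliceDisc_norm_lt hz
  have hterms := tendsto_zero_of_tendsto_sum_range (hseries w hw)
  have hlocal := Filter.eventually_of_mem (isOpen_sliceDisc.mem_nhds hz) hseries
  exact (differentiableAt_of_tendsto_sum_pow_smul hterms hzw hlocal).differentiableWithinAt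

theorem RepOn.norm_apply_zero_eq_of_isMaxOn (ha : RepOn γ a F) {X₀ : Fin n → H →L[ℂ] H}
    (hX₀ : X₀ ∈ ball n H γ) (hmax : IsMaxOn (norm ∘ F) (ball n H γ) X₀) :
    ‖F 0‖ = ‖F X₀‖ := by
  have hslice : IsMaxOn (norm ∘ fun z : ℂ => F (z • X₀)) (sliceDisc γ X₀) 1 := fun z hz => by
    simpa using hmax hz
  simpa using Complex.norm_eqOn_of_isPreconnected_of_isMaxOn isPreconnected_sliceDisc
    isOpen_sliceDisc (ha.differentiableOn_slice X₀) (one_mem_sliceDisc hX₀) hslice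
    (zero_mem_sliceDisc (pos_of_mem_ball hX₀))

theorem RepOn.eqOn_of_isMaxOn_zero (ha : RepOn γ a F)
    (hmax : IsMaxOn (norm ∘ F) (ball n H γ) 0) :
    Set.EqOn F (Function.const _ (F 0)) (ball n H γ) := by
  intro X hX
  have hγ := pos_of_mem_ball hX
  have : StrictConvexSpace ℝ H :=
    let : InnerProductSpace ℝ H := InnerProductSpace.complexToReal
    inferInstance
  have hslice : IsMaxOn (norm ∘ fun z : ℂ => F (z • X)) (sliceDisc γ X) 0 := fun z hz => by
    simpa using hmax hz
  have hscalar (x : H) : ‖F ((0 : ℂ) • X) x‖ = ‖F ((0 : ℂ) • X)‖ * ‖x‖ := by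
    cases subsingleton_or_nontrivial H
    · simp [Subsingleton.elim x 0]
    · simp [ha.apply_zero hγ, norm_smul]
  simpa using eqOn_of_isMaxOn_norm_of_norm_apply_eq isPreconnected_sliceDisc isOpen_sliceDisc
    (ha.differentiableOn_slice X) (zero_mem_sliceDisc hγ) hslice hscalar (one_mem_sliceDisc hX)

end MaximumPrinciple

end NC

open NC in
theorem maximum_principle_general
    {H : Type*} [NormedAddCommGroup H] [InnerProductSpace ℂ H] [CompleteSpace H] {n : ℕ} {γ : ℝ}
    {a : List (Fin n) → ℂ} {F : (Fin n → H →L[ℂ] H) → H →L[ℂ] H} (ha : RepOn γ a F)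
    {X₀ : Fin n → H →L[ℂ] H} (hX₀ : X₀ ∈ ball n H γ) (hmax : ∀ X ∈ ball n H γ, ‖F X‖ ≤ ‖F X₀‖) :
    ∀ X ∈ ball n H γ, F X = F X₀ := by
  have hnorm : ‖F 0‖ = ‖F X₀‖ := ha.norm_apply_zero_eq_of_isMaxOn hX₀ hmax
  have hmax_zero : IsMaxOn (norm ∘ F) (ball n H γ) 0 := fun X hX =>
    (hmax X hX).trans_eq hnorm.symm
  have hconst := ha.eqOn_of_isMaxOn_zero hmax_zero
  exact fun X hX => (hconst hX).trans (hconst hX₀).symm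

open NC in
/-- **Maximum principle for free holomorphic functions.**
If a free holomorphic function `F` (with scalar coefficients) on `[B(H)ⁿ]_1` attains the
maximum of its norm at some point `X₀` of the ball, then `F` is constant. -/
theorem maximum_principle
    {H : Type*} [NormedAddCommGroup H] [InnerProductSpace ℂ H] [CompleteSpace H]
    [TopologicalSpace.SeparableSpace H] (hH : ¬ FiniteDimensional ℂ H)
    {n : ℕ}
    (F : (Fin n → H →L[ℂ] H) → H →L[ℂ] H)
    (a : List (Fin n) → ℂ) (ha : RepOn 1 a F)
    (X₀ : Fin n → H →L[ℂ] H) (hX₀ : X₀ ∈ ball n H 1)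
    (hmax : ∀ X ∈ ball n H 1, ‖F X‖ ≤ ‖F X₀‖) :
    ∀ X ∈ ball n H 1, F X = F X₀ :=
  maximum_principle_general ha hX₀ hmax
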